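/- arXiv:1007.4621 — 2 statements merged into one kernel-verified Lean document; each statement's English description precedes it below -/
import Mathlib

section
/- For every prime power q, one has h(2) < 10/q. -/
/-!
With `x = |P|⁻¹ ≤ 1/2` one has `v_P ≤ x` and `u_P ≤ (9/5) x`, so each term of `h(2)` is at most
`(9/2) x²` (`term_le`). There are at most `q ^ d` monic polynomials of degree `d`
(`card_monic_le`), so degree `d` contributes at most `(9/2) q⁻ᵈ`, and summing the geometric series
over `d ≥ 1` gives `h(2) ≤ (9/2) / (q - 1)`. This is less than `10 / q` because `q ≥ 2`.

The cruder bound `u_P ≤ x / (1 - x) ≤ 2x` leads to `5 / (q - 1)`, which only equals `10 / q` at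
`q = 2`; the constant `9/5` leaves the room needed for strictness.
-/

open Polynomial

/-- `u_P = -log(1 - |P|⁻¹)` where `|P| = q^(deg P)`. -/
noncomputable def uP {Fq : Type} [Field Fq] [Fintype Fq] (P : Polynomial Fq) : ℝ :=
  -Real.log (1 - ((Fintype.card Fq : ℝ) ^ P.natDegree)⁻¹)

/-- `v_P = log(1 + |P|⁻¹)` where `|P| = q^(deg P)`. -/
noncomputable def vP {Fq : Type} [Field Fq] [Fintype Fq] (P : Polynomial Fq) : ℝ :=
  Real.log (1 + ((Fintype.card Fq : ℝ) ^ P.natDegree)⁻¹)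

/-- `h(λ) = ∑_P (u_P^λ + (-1)^λ v_P^λ)`, the sum over all monic irreducible
polynomials `P ∈ Fq[X]`. -/
noncomputable def hfun (Fq : Type) [Field Fq] [Fintype Fq] (l : ℕ) : ℝ :=
  ∑' P : {P : Polynomial Fq // P.Monic ∧ Irreducible P},
    (uP P.1 ^ l + (-1 : ℝ) ^ l * vP P.1 ^ l)

/-- The improvement over `-log (1 - x) ≤ x / (1 - x)` comes from applying `1 - y⁻¹ ≤ log y` at
`y = √(1 - x)`. -/
lemma neg_log_one_sub_le {x : ℝ} (hx0 : 0 ≤ x) (hx : x ≤ 1 / 2) :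
    -Real.log (1 - x) ≤ 9 / 5 * x := by
  obtain ⟨s, hs⟩ : ∃ s, s = Real.sqrt (1 - x) := ⟨_, rfl⟩
  have hs2 : s ^ 2 = 1 - x := by rw [hs]; exact Real.sq_sqrt (by linarith)
  have hs0 : 7 / 10 ≤ s := by rw [hs]; exact Real.le_sqrt_of_sq_le (by norm_num; linarith)
  have hs1 : s ≤ 1 := by nlinarith
  have hl : Real.log (1 - x) = 2 * Real.log s := by rw [← hs2, Real.log_pow]; norm_num
  have h1 := Real.one_sub_inv_le_log_of_pos (show 0 < s by linarith)
  have h2 : s⁻¹ - 1 ≤ 9 / 10 * (1 - s ^ 2) := by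
    have : s⁻¹ - 1 = (1 - s) / s := by field_simp
    rw [this, div_le_iff₀ (by linarith)]
    have h3 : 0 ≤ 9 / 10 * (1 + s) * s - 1 := by nlinarith
    nlinarith [mul_nonneg (sub_nonneg.2 hs1) h3]
  rw [hl]
  linarith

lemma term_le {x : ℝ} (hx0 : 0 ≤ x) (hx : x ≤ 1 / 2) :
    (-Real.log (1 - x)) ^ 2 + Real.log (1 + x) ^ 2 ≤ 9 / 2 * x ^ 2 := by
  have h1 := neg_log_one_sub_le hx0 hx
  have h0 : 0 ≤ -Real.log (1 - x) := by
    have := Real.log_nonpos (show 0 ≤ 1 - x by linarith) (by linarith)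
    linarith
  have h2 : Real.log (1 + x) ≤ x := by
    have := Real.log_le_sub_one_of_pos (show 0 < 1 + x by linarith)
    linarith
  have h3 : 0 ≤ Real.log (1 + x) := Real.log_nonneg (by linarith)
  nlinarith [pow_le_pow_left₀ h0 h1 2, pow_le_pow_left₀ h3 h2 2]

lemma card_monic_le {Fq : Type} [Field Fq] [Fintype Fq] (d : ℕ) (t : Finset (Polynomial Fq))
    (ht : ∀ P ∈ t, P.Monic ∧ P.natDegree = d) : t.card ≤ Fintype.card Fq ^ d := by
  classical
  -- A monic polynomial of degree `d` is determined by its `d` lower coefficients.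
  have h : t.card ≤ (Finset.univ : Finset (Fin d → Fq)).card := by
    refine Finset.card_le_card_of_injOn (fun P i => P.coeff i) (fun _ _ => Finset.mem_coe.2
      (Finset.mem_univ _)) ?_
    intro P hP Q hQ h
    obtain ⟨hPm, hPd⟩ := ht P hP
    obtain ⟨hQm, hQd⟩ := ht Q hQ
    ext n
    rcases lt_trichotomy n d with hn | hn | hn
    · exact congrFun h ⟨n, hn⟩
    · have h1 := hPm.coeff_natDegree
      have h2 := hQm.coeff_natDegree
      rw [hPd] at h1
      rw [hQd] at h2
      rw [hn, h1, h2]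
    · rw [coeff_eq_zero_of_natDegree_lt (by omega), coeff_eq_zero_of_natDegree_lt (by omega)]
  simpa using h

lemma sum_inv_norm_sq_le {Fq : Type} [Field Fq] [Fintype Fq]
    (s : Finset {P : Polynomial Fq // P.Monic ∧ Irreducible P}) :
    ∑ P ∈ s, (((Fintype.card Fq : ℝ) ^ P.1.natDegree)⁻¹) ^ 2 ≤
      ((Fintype.card Fq : ℝ) - 1)⁻¹ := by
  classical
  have hq : (2 : ℝ) ≤ Fintype.card Fq := by exact_mod_cast Fintype.one_lt_card (α := Fq)
  set q : ℝ := (Fintype.card Fq : ℝ) with hqdef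
  have hq0 : 0 < q := by linarith
  -- Irreducibles have positive degree, so fibering over `deg P - 1` starts the series at `d = 1`.
  have hdeg : ∀ P : {P : Polynomial Fq // P.Monic ∧ Irreducible P},
      P.1.natDegree - 1 + 1 = P.1.natDegree := fun P => by
    have := P.2.2.natDegree_pos
    omega
  have hgeo : HasSum (fun k : ℕ => q⁻¹ * q⁻¹ ^ k) (q⁻¹ * (1 - q⁻¹)⁻¹) :=
    (hasSum_geometric_of_lt_one (by positivity)
      (inv_lt_one_of_one_lt₀ (by linarith))).mul_left _
  have hval : q⁻¹ * (1 - q⁻¹)⁻¹ = (q - 1)⁻¹ := by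
    rw [← mul_inv, mul_sub, mul_one, mul_inv_cancel₀ hq0.ne']
  rw [← hval]
  let g : {P : Polynomial Fq // P.Monic ∧ Irreducible P} → ℕ := fun P => P.1.natDegree - 1
  rw [← Finset.sum_fiberwise_of_maps_to (t := s.image g) (g := g)
    (fun P hP => Finset.mem_image_of_mem g hP)]
  refine le_trans (Finset.sum_le_sum ?_) (sum_le_hasSum (s.image g) (fun k _ => by positivity) hgeo)
  intro k _
  have hfib : ∀ P ∈ s.filter (fun P => g P = k), P.1.natDegree = k + 1 := fun P hP => by
    rw [← hdeg P, ← (Finset.mem_filter.1 hP).2]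
  have hcard : (s.filter (fun P => g P = k)).card ≤ Fintype.card Fq ^ (k + 1) := by
    rw [← Finset.card_map (Function.Embedding.subtype _)]
    refine card_monic_le (k + 1) _ ?_
    intro P hP
    obtain ⟨Q, hQ, rfl⟩ := Finset.mem_map.1 hP
    exact ⟨Q.2.1, hfib Q hQ⟩
  have hcard' : ((s.filter (fun P => g P = k)).card : ℝ) ≤ q ^ (k + 1) := by
    rw [hqdef]; exact_mod_cast hcard
  rw [Finset.sum_congr rfl (fun P hP => by rw [hfib P hP]), Finset.sum_const, nsmul_eq_mul]
  calc _ ≤ q ^ (k + 1) * ((q ^ (k + 1))⁻¹) ^ 2 := by gcongr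
    _ = q⁻¹ * q⁻¹ ^ k := by
      rw [← pow_succ' q⁻¹ k, inv_pow q, sq, ← mul_assoc, mul_inv_cancel₀ (by positivity),
        one_mul]

/-- For every prime power `q` (realized as the cardinality of a finite field `Fq`),
one has `h(2) < 10/q`. -/
theorem hfun_two_lt (Fq : Type) [Field Fq] [Fintype Fq] :
    hfun Fq 2 < 10 / (Fintype.card Fq : ℝ) := by
  have hq : (2 : ℝ) ≤ Fintype.card Fq := by exact_mod_cast Fintype.one_lt_card (α := Fq)
  have hle : hfun Fq 2 ≤ 9 / 2 * ((Fintype.card Fq : ℝ) - 1)⁻¹ := by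
    refine Real.tsum_le_of_sum_le (fun P => by rw [neg_one_sq, one_mul]; positivity) fun s => ?_
    refine le_trans (Finset.sum_le_sum fun P _ => ?_) (le_of_eq_of_le (Finset.mul_sum _ _ _).symm
      (mul_le_mul_of_nonneg_left (sum_inv_norm_sq_le s) (by norm_num)))
    rw [neg_one_sq, one_mul]
    refine term_le (by positivity) ?_
    rw [one_div]
    refine inv_anti₀ (by norm_num) (hq.trans ?_)
    exact le_self_pow₀ (by linarith) P.2.2.natDegree_pos.ne'
  refine hle.trans_lt ?_
  rw [← div_eq_mul_inv, div_lt_div_iff₀ (by linarith) (by linarith)]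
  linarith
end

section
/- For every even integer λ ≥ 2 there is a constant C_λ > 0, depending only on λ, such that for every prime power q one has |z(λ) − 2 q^{1−λ}| ≤ C_λ q^{−λ}, where z(λ) = ∑_P (u_P^λ + v_P^λ)/(1 + |P|^{−1}), the sum over all monic irreducible polynomials P ∈ 𝔽_q[X]. -/
/-!
The summand depends on `P` only through its degree `n`, so `z(λ) = ∑ₙ Nₙ · F(q⁻ⁿ)`, where `Nₙ` is
the number of monic irreducible polynomials of degree `n` and
`F(x) = ((-log (1 - x))^λ + log (1 + x)^λ) / (1 + x)`.

On `(0, 1/2]` one has `F(x) = 2 x^λ + O(x^(λ+1))` (`abs_summand_sub_le`). Since `N₀ = 0` and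
`N₁ = q`, the linear polynomials contribute `q F(1/q) = 2 q^(1-λ) + O(q^(-λ))`. For `n ≥ 2` the
trivial bound `Nₙ ≤ qⁿ` gives a geometric tail of ratio `r = q^(1-λ) ≤ 1/2`, which is
`O(r²) = O(q^(2-2λ))`; this is `O(q^(-λ))` because `λ ≥ 2`.
-/

open Polynomial

/-- The summand of `z(l)` as a function of `x = |P|⁻¹`. -/
noncomputable def summand (l : ℕ) (x : ℝ) : ℝ :=
  ((-Real.log (1 - x)) ^ l + Real.log (1 + x) ^ l) / (1 + x)

lemma neg_log_bounds {x : ℝ} (h0 : 0 < x) (h1 : x ≤ 1 / 2) :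
    x ≤ -Real.log (1 - x) ∧ -Real.log (1 - x) ≤ x + 2 * x ^ 2 := by
  have hpos : 0 < 1 - x := by linarith
  constructor
  · have := Real.log_le_sub_one_of_pos hpos
    linarith
  · have h := Real.one_sub_inv_le_log_of_pos hpos
    have h2 : (1 - x)⁻¹ ≤ 1 + x + 2 * x ^ 2 := by
      rw [inv_le_iff_one_le_mul₀ hpos]
      nlinarith [mul_nonneg (sq_nonneg x) (by linarith : (0 : ℝ) ≤ 1 - 2 * x)]
    linarith

lemma log_bounds {x : ℝ} (h0 : 0 < x) :
    x - x ^ 2 ≤ Real.log (1 + x) ∧ Real.log (1 + x) ≤ x := by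
  have hpos : 0 < 1 + x := by linarith
  constructor
  · have h := Real.one_sub_inv_le_log_of_pos hpos
    have h2 : (1 + x)⁻¹ ≤ 1 - x + x ^ 2 := by
      rw [inv_le_iff_one_le_mul₀ hpos]
      nlinarith [pow_pos h0 3]
    linarith
  · have := Real.log_le_sub_one_of_pos hpos
    linarith

/-- A second-order perturbation of `x` changes `x ^ l` by `O(x ^ (l + 1))`. -/
lemma abs_pow_sub_pow_le_of_close {x w : ℝ} (l : ℕ) (h0 : 0 < x) (hw0 : 0 ≤ w) (hw : w ≤ 2 * x)
    (h : |w - x| ≤ 2 * x ^ 2) : |w ^ l - x ^ l| ≤ l * 2 ^ l * x ^ (l + 1) := by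
  rcases l with _ | l
  · simp
  have hm := abs_pow_sub_pow_le w x (l + 1)
  have hmax : max |w| |x| ≤ 2 * x := by
    rw [abs_of_nonneg hw0, abs_of_pos h0]
    exact max_le hw (by linarith)
  calc |w ^ (l + 1) - x ^ (l + 1)|
      ≤ |w - x| * (l + 1 : ℕ) * max |w| |x| ^ (l + 1 - 1) := hm
    _ ≤ (2 * x ^ 2) * (l + 1 : ℕ) * (2 * x) ^ (l + 1 - 1) := by gcongr
    _ = (l + 1 : ℕ) * 2 ^ (l + 1) * x ^ (l + 1 + 1) := by
      rw [Nat.add_sub_cancel]; ring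

lemma summand_nonneg {l : ℕ} {x : ℝ} (h0 : 0 < x) (h1 : x ≤ 1 / 2) : 0 ≤ summand l x := by
  have hu := neg_log_bounds h0 h1
  have hv : 0 ≤ Real.log (1 + x) := Real.log_nonneg (by linarith)
  have hu0 : 0 ≤ -Real.log (1 - x) := h0.le.trans hu.1
  unfold summand
  positivity

lemma summand_le {l : ℕ} {x : ℝ} (h0 : 0 < x) (h1 : x ≤ 1 / 2) :
    summand l x ≤ 2 * 2 ^ l * x ^ l := by
  have hu := neg_log_bounds h0 h1
  have hv := log_bounds h0
  have hv0 : 0 ≤ Real.log (1 + x) := Real.log_nonneg (by linarith)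
  have hu0 : 0 ≤ -Real.log (1 - x) := h0.le.trans hu.1
  have hA : (-Real.log (1 - x)) ^ l ≤ (2 * x) ^ l :=
    pow_le_pow_left₀ hu0 (by nlinarith) l
  have hB : Real.log (1 + x) ^ l ≤ (2 * x) ^ l :=
    pow_le_pow_left₀ hv0 (by linarith) l
  unfold summand
  calc _ ≤ (-Real.log (1 - x)) ^ l + Real.log (1 + x) ^ l :=
        div_le_self (by positivity) (by linarith)
    _ ≤ (2 * x) ^ l + (2 * x) ^ l := add_le_add hA hB
    _ = 2 * 2 ^ l * x ^ l := by rw [mul_pow]; ring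

lemma abs_summand_sub_le {l : ℕ} {x : ℝ} (h0 : 0 < x) (h1 : x ≤ 1 / 2) :
    |summand l x - 2 * x ^ l| ≤ (2 * (l * 2 ^ l) + 2) * x ^ (l + 1) := by
  have hu := neg_log_bounds h0 h1
  have hv := log_bounds h0
  have hv0 : 0 ≤ Real.log (1 + x) := Real.log_nonneg (by linarith)
  have hu0 : 0 ≤ -Real.log (1 - x) := h0.le.trans hu.1
  have hA := abs_pow_sub_pow_le_of_close l h0 hu0 (by nlinarith)
    (abs_le.2 ⟨by nlinarith, by linarith⟩)
  have hB := abs_pow_sub_pow_le_of_close l h0 hv0 (by linarith)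
    (abs_le.2 ⟨by nlinarith, by nlinarith⟩)
  have hpos : 0 < 1 + x := by linarith
  have key : summand l x - 2 * x ^ l = (((-Real.log (1 - x)) ^ l - x ^ l)
      + (Real.log (1 + x) ^ l - x ^ l) - 2 * x ^ (l + 1)) / (1 + x) := by
    unfold summand
    field_simp
    ring
  rw [key, abs_div, abs_of_pos hpos]
  refine (div_le_self (abs_nonneg _) (by linarith)).trans ?_
  have hx : 0 ≤ x ^ (l + 1) := by positivity
  rw [abs_le] at hA hB ⊢
  constructor <;> nlinarith

section Counting

variable (Fq : Type) [Field Fq]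

/-- The monic irreducible polynomials of degree `n`, as the fibre of the degree map. -/
abbrev DegFiber (n : ℕ) : Type :=
  {P : {P : Polynomial Fq // P.Monic ∧ Irreducible P} // P.1.natDegree = n}

/-- A monic polynomial of degree `n` is determined by its coefficients of index `< n`. -/
lemma coeff_injective (n : ℕ) :
    Function.Injective (fun (P : DegFiber Fq n) (i : Fin n) => P.1.1.coeff i) := by
  rintro ⟨⟨P, hP, hP'⟩, hPn⟩ ⟨⟨Q, hQ, hQ'⟩, hQn⟩ h
  simp only at hPn hQn h
  have : P = Q := by
    ext i
    rcases lt_trichotomy i n with hi | hi | hi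
    · exact congrFun h ⟨i, hi⟩
    · have h1 := hP.coeff_natDegree
      have h2 := hQ.coeff_natDegree
      rw [hPn] at h1
      rw [hQn] at h2
      rw [hi, h1, h2]
    · rw [coeff_eq_zero_of_natDegree_lt (hPn ▸ hi), coeff_eq_zero_of_natDegree_lt (hQn ▸ hi)]
  subst this
  rfl

instance [Fintype Fq] (n : ℕ) : Finite (DegFiber Fq n) := Finite.of_injective _ (coeff_injective Fq n)

lemma card_degFiber_le [Fintype Fq] (n : ℕ) : Nat.card (DegFiber Fq n) ≤ Fintype.card Fq ^ n := by
  have := Nat.card_le_card_of_injective _ (coeff_injective Fq n)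
  simpa using this

lemma card_degFiber_zero : Nat.card (DegFiber Fq 0) = 0 := by
  have : IsEmpty (DegFiber Fq 0) := ⟨fun P => P.1.2.2.natDegree_pos.ne' P.2⟩
  exact Nat.card_of_isEmpty

lemma card_degFiber_one [Fintype Fq] : Nat.card (DegFiber Fq 1) = Fintype.card Fq := by
  refine le_antisymm (by simpa using card_degFiber_le Fq 1) ?_
  have hinj : Function.Injective (fun a : Fq =>
      (⟨⟨X - C a, monic_X_sub_C a, irreducible_X_sub_C a⟩, natDegree_X_sub_C a⟩ :
        DegFiber Fq 1)) := by
    intro a b h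
    have h' : (X - C a : Polynomial Fq) = X - C b := congrArg (fun P => P.1.1) h
    exact C_injective (sub_right_injective h')
  have := Nat.card_le_card_of_injective _ hinj
  simpa using this

end Counting

/-- A sum over the fibres of a degree map, for a nonnegative function of the degree. -/
lemma tsum_comp_eq_tsum_card {S : Type} (d : S → ℕ) [∀ n, Finite {s // d s = n}] (F : ℕ → ℝ)
    (hF : ∀ s, 0 ≤ F (d s))
    (hs : Summable fun n => (Nat.card {s // d s = n} : ℝ) * F n) :
    ∑' s, F (d s) = ∑' n, (Nat.card {s // d s = n} : ℝ) * F n := by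
  have hfib : ∀ n, ∑' s : {s // d s = n}, F (d s.1) = (Nat.card {s // d s = n} : ℝ) * F n := by
    intro n
    have : ∀ s : {s // d s = n}, F (d s.1) = F n := fun s => by rw [s.2]
    simp_rw [this]
    rw [tsum_const, nsmul_eq_mul]
  have hsum : Summable fun p : (Σ n, {s // d s = n}) => F (d p.2.1) := by
    rw [summable_sigma_of_nonneg (fun p => hF _)]
    refine ⟨fun n => Summable.of_finite, ?_⟩
    simpa only [hfib] using hs
  rw [← (Equiv.sigmaFiberEquiv d).tsum_eq]
  simp only [Equiv.sigmaFiberEquiv_apply]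
  rw [hsum.tsum_sigma]
  simp only [hfib]

/-- For every even integer `λ ≥ 2` there is a constant `C_λ > 0` such that for every
prime power `q` (realized as the cardinality of a finite field `Fq`) one has
`|z(λ) - 2 q^(1-λ)| ≤ C_λ q^(-λ)`, where
`z(λ) = ∑_P (u_P^λ + v_P^λ)/(1 + |P|⁻¹)`, the sum over all monic irreducible
polynomials `P ∈ Fq[X]`. -/
theorem z_even_asymptotic (l : ℕ) (hl : 2 ≤ l) (hev : Even l) :
    ∃ C : ℝ, 0 < C ∧
      ∀ (Fq : Type) [Field Fq] [Fintype Fq],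
        |(∑' P : {P : Polynomial Fq // P.Monic ∧ Irreducible P},
            (uP P.1 ^ l + vP P.1 ^ l) /
              (1 + ((Fintype.card Fq : ℝ) ^ P.1.natDegree)⁻¹))
          - 2 * (Fintype.card Fq : ℝ) ^ ((1 : ℤ) - (l : ℤ))|
        ≤ C * ((Fintype.card Fq : ℝ) ^ l)⁻¹ := by
  -- The first summand of `C` bounds the error in degree one, the second the tail.
  refine ⟨(2 * (l * 2 ^ l) + 2) + 2 * (2 * 2 ^ l), by positivity, ?_⟩
  intro Fq _ _
  have hq2 : (2 : ℝ) ≤ Fintype.card Fq := by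
    exact_mod_cast Fintype.one_lt_card (α := Fq)
  set q : ℝ := (Fintype.card Fq : ℝ) with hq
  have hq0 : 0 < q := by linarith
  set y : ℝ := (q ^ l)⁻¹ with hy
  have hy0 : 0 < y := by positivity
  have hqy : q ^ 2 * y ≤ 1 := by
    rw [hy, ← div_eq_mul_inv, div_le_one (by positivity)]
    exact pow_le_pow_right₀ (by linarith) hl
  set r : ℝ := q * y with hr
  have hr0 : 0 < r := by positivity
  have hr2 : r ≤ 1 / 2 := by nlinarith
  have hzpow : q ^ ((1 : ℤ) - (l : ℤ)) = r := by
    rw [zpow_sub₀ hq0.ne', zpow_one, zpow_natCast, hr, hy, div_eq_mul_inv]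
  set F : ℕ → ℝ := fun n => summand l (q ^ n)⁻¹ with hF
  have hx0 : ∀ n : ℕ, 0 < (q ^ n)⁻¹ := fun n => by positivity
  have hx1 : ∀ n : ℕ, 1 ≤ n → (q ^ n)⁻¹ ≤ 1 / 2 := by
    intro n hn
    rw [one_div]
    refine inv_anti₀ (by norm_num) (hq2.trans ?_)
    exact le_self_pow₀ (by linarith) (by omega)
  have hFn : ∀ n, 1 ≤ n → 0 ≤ F n := fun n hn => summand_nonneg (hx0 n) (hx1 n hn)
  set N : ℕ → ℝ := fun n => (Nat.card (DegFiber Fq n) : ℝ) with hN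
  have hN0 : N 0 = 0 := by simp only [hN, card_degFiber_zero, Nat.cast_zero]
  have hN1 : N 1 = q := by simp only [hN, card_degFiber_one, hq]
  have hNn : ∀ n, N n ≤ q ^ n := by
    intro n
    have := card_degFiber_le Fq n
    simp only [hN, hq]
    exact_mod_cast this
  have hNnn : ∀ n, 0 ≤ N n := fun n => Nat.cast_nonneg _
  have hterm0 : ∀ n, 0 ≤ N (n + 2) * F (n + 2) :=
    fun n => mul_nonneg (hNnn _) (hFn _ (by omega))
  have hterm : ∀ n, N (n + 2) * F (n + 2) ≤ 2 * 2 ^ l * r ^ 2 * r ^ n := by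
    intro n
    calc N (n + 2) * F (n + 2)
        ≤ q ^ (n + 2) * (2 * 2 ^ l * ((q ^ (n + 2))⁻¹) ^ l) :=
          mul_le_mul (hNn _) (summand_le (hx0 _) (hx1 _ (by omega))) (hFn _ (by omega))
            (by positivity)
      _ = 2 * 2 ^ l * r ^ 2 * r ^ n := by
          have : ((q ^ (n + 2))⁻¹) ^ l = y ^ (n + 2) := by
            rw [hy, inv_pow, inv_pow, ← pow_mul, ← pow_mul, mul_comm]
          rw [this, hr]
          ring
  have hgeo : Summable fun n : ℕ => 2 * 2 ^ l * r ^ 2 * r ^ n :=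
    (summable_geometric_of_lt_one hr0.le (by linarith)).mul_left _
  have hst : Summable fun n => N (n + 2) * F (n + 2) :=
    Summable.of_nonneg_of_le hterm0 hterm hgeo
  have hs : Summable fun n => N n * F n := (summable_nat_add_iff 2).1 hst
  have hz : (∑' P : {P : Polynomial Fq // P.Monic ∧ Irreducible P},
      (uP P.1 ^ l + vP P.1 ^ l) / (1 + (q ^ P.1.natDegree)⁻¹)) = ∑' n, N n * F n :=
    tsum_comp_eq_tsum_card
      (fun P : {P : Polynomial Fq // P.Monic ∧ Irreducible P} => P.1.natDegree) F
      (fun P => hFn _ P.2.2.natDegree_pos) hs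
  rw [hz, hzpow, ← hs.sum_add_tsum_nat_add 2, Finset.sum_range_succ, Finset.sum_range_one, hN0,
    hN1, zero_mul, zero_add]
  have htail0 : 0 ≤ ∑' n, N (n + 2) * F (n + 2) := tsum_nonneg hterm0
  have htail : ∑' n, N (n + 2) * F (n + 2) ≤ 2 * (2 * 2 ^ l) * y := by
    calc ∑' n, N (n + 2) * F (n + 2) ≤ ∑' n : ℕ, 2 * 2 ^ l * r ^ 2 * r ^ n :=
          hst.tsum_le_tsum hterm hgeo
      _ = 2 * 2 ^ l * (r ^ 2 * (1 - r)⁻¹) := by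
          rw [tsum_mul_left, tsum_geometric_of_lt_one hr0.le (by linarith)]
          ring
      _ ≤ 2 * 2 ^ l * (y * 2) := by
          have h1 : r ^ 2 ≤ y := by
            calc r ^ 2 = q ^ 2 * y * y := by rw [hr]; ring
              _ ≤ 1 * y := by gcongr
              _ = y := one_mul y
          have h2 : (1 - r)⁻¹ ≤ 2 := by
            rw [inv_le_iff_one_le_mul₀ (by linarith)]
            linarith
          have h3 : 0 ≤ (1 - r)⁻¹ := inv_nonneg.2 (by linarith)
          gcongr
      _ = 2 * (2 * 2 ^ l) * y := by ring
  have hmain : |q * F 1 - 2 * r| ≤ (2 * (l * 2 ^ l) + 2) * y := by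
    have h := abs_summand_sub_le (l := l) (hx0 1) (hx1 1 le_rfl)
    have hpow : ((q ^ 1)⁻¹) ^ l = y := by rw [pow_one, inv_pow]
    have hF1 : F 1 = summand l (q ^ 1)⁻¹ := rfl
    rw [pow_succ _ l, hpow, ← hF1] at h
    have e : q * F 1 - 2 * r = q * (F 1 - 2 * y) := by rw [hr]; ring
    rw [e, abs_mul, abs_of_pos hq0]
    calc q * |F 1 - 2 * y| ≤ q * ((2 * (l * 2 ^ l) + 2) * (y * (q ^ 1)⁻¹)) := by gcongr
      _ = (2 * (l * 2 ^ l) + 2) * y := by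
          field_simp
  rw [abs_le] at hmain ⊢
  constructor <;> nlinarith
end
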